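/- arXiv:1805.02419 — 2 statements merged into one kernel-verified Lean document; each statement's English description precedes it below -/
import Mathlib

section
/- (Liouville theorem.) Let n ≥ 1 and let μ satisfy 2μ ≥ n. Let λ, Λ > 0, let A be a C¹ matrix-valued map on ℝⁿ satisfying the uniform ellipticity condition with constants λ, Λ, and let w : ℝⁿ → ℂ be C² and satisfy the self-similar profile equation div(A∇w)(x) = (1/2)(i·w(x) + μ·w(x) + x·∇w(x)) for all x ∈ ℝⁿ. If there exists M > 0 such that |w(x)| ≤ M(1+|x|)^{−μ} for all x ∈ ℝⁿ, then w is identically zero. -/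
/-! The proof is a localized energy estimate. With `s = max 0 (1 - ‖x‖² / R²)` and the cutoff `s²`,
consider the compactly supported `C¹` vector field
`F = s² (Re (conj w • A ∇w) - ¼ |w|² x)`. Using the equation,
`div F = s² (Re (A∇w · conj ∇w) + (μ/2 - n/4) |w|²) - (4 s / R²) Re (conj w (A∇w · x))
  + (s / R²) |w|² |x|²`.
Here `2μ ≥ n` and the monotonicity of the cutoff make the `|w|²` terms nonnegative, and Young's
inequality absorbs the mixed term, so that
`div F ≥ (λ/2) s² |∇w|² - C R⁻² |w|² 1_{|x| ≤ R}`.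
The decay gives `|w|² ≤ M² (1 + |x|)^{-n} ≤ M² (1 + R) (1 + |x|)^{-(n+1)}` on the ball, and the last
weight is integrable. As `∫ div F = 0`, it follows that `∫ s² |∇w|² = O((1 + R) / R²)`. The cutoff
increases with `R`, so letting `R → ∞` forces `∇w = 0`; the equation then reads `(i + μ) w = 0`,
whence `w = 0`. -/

open scoped BigOperators

noncomputable section

/-- The `k`-th partial derivative of `w : ℝⁿ → ℂ`. -/
def pdC {n : ℕ} (w : EuclideanSpace ℝ (Fin n) → ℂ) (x : EuclideanSpace ℝ (Fin n))
    (k : Fin n) : ℂ :=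
  fderiv ℝ w x (EuclideanSpace.single k 1)

/-- `div(A ∇w)(x) = ∑ₖ ∂ₖ (∑ₗ A_{kl} ∂ₗ w)(x)`. -/
def divAgrad {n : ℕ} (A : EuclideanSpace ℝ (Fin n) → Matrix (Fin n) (Fin n) ℂ)
    (w : EuclideanSpace ℝ (Fin n) → ℂ) (x : EuclideanSpace ℝ (Fin n)) : ℂ :=
  ∑ k, fderiv ℝ (fun y => ∑ l, A y k l * pdC w y l) x (EuclideanSpace.single k 1)

/-- Uniform ellipticity with constants `lam, Lam` at every point of `ℝⁿ`. -/
def UniformlyElliptic {n : ℕ} (A : EuclideanSpace ℝ (Fin n) → Matrix (Fin n) (Fin n) ℂ)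
    (lam Lam : ℝ) : Prop :=
  ∀ x, ∀ p : Fin n → ℂ,
    lam * ∑ k, ‖p k‖ ^ 2 ≤ (∑ k, ∑ l, A x k l * p k * (starRingEnd ℂ) (p l)).re ∧
    ∑ k, ‖(A x).mulVec p k‖ ^ 2 ≤ Lam ^ 2 * ∑ k, ‖p k‖ ^ 2

open MeasureTheory Filter Topology

/-- The radial function `max 0 (1 - ‖x‖² / R²)`; its square is the cutoff in the energy
estimate. -/
def cutS {n : ℕ} (R : ℝ) (x : EuclideanSpace ℝ (Fin n)) : ℝ := max 0 (1 - ‖x‖ ^ 2 / R ^ 2)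

/-- The `k`-th component `∑ₗ A_{kl} ∂ₗ w` of the flux `A ∇w`. -/
def flux {n : ℕ} (A : EuclideanSpace ℝ (Fin n) → Matrix (Fin n) (Fin n) ℂ)
    (w : EuclideanSpace ℝ (Fin n) → ℂ) (k : Fin n) (x : EuclideanSpace ℝ (Fin n)) : ℂ :=
  ∑ l, A x k l * pdC w x l

/-- The squared gradient `|∇w|²`. -/
def gradSq {n : ℕ} (w : EuclideanSpace ℝ (Fin n) → ℂ) (x : EuclideanSpace ℝ (Fin n)) : ℝ :=
  ∑ k, ‖pdC w x k‖ ^ 2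

/-- The `k`-th component of the vector field `s² (Re (conj w • A ∇w) - ¼ |w|² x)`; real inner
products on `ℂ` encode the real parts. -/
def energyField {n : ℕ} (A : EuclideanSpace ℝ (Fin n) → Matrix (Fin n) (Fin n) ℂ)
    (w : EuclideanSpace ℝ (Fin n) → ℂ) (R : ℝ) (k : Fin n) (x : EuclideanSpace ℝ (Fin n)) : ℝ :=
  cutS R x ^ 2 * (inner ℝ (w x) (flux A w k x) - 1 / 4 * (inner ℝ (w x) (w x) * x k))

lemma hasDerivAt_max_sq (u : ℝ) : HasDerivAt (fun u : ℝ => (max 0 u) ^ 2) (2 * max 0 u) u := by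
  rcases lt_trichotomy u 0 with h | h | h
  · rw [max_eq_left h.le, mul_zero]
    refine (hasDerivAt_const u (0 : ℝ)).congr_of_eventuallyEq ?_
    filter_upwards [gt_mem_nhds h] with v hv
    simp [max_eq_left (le_of_lt hv)]
  · subst h
    rw [max_self, mul_zero, hasDerivAt_iff_isLittleO]
    simp only [max_self, sub_zero, smul_zero, ne_eq, OfNat.ofNat_ne_zero, not_false_eq_true,
      zero_pow]
    refine Asymptotics.IsBigO.trans_isLittleO (g := fun u : ℝ => u ^ 2) ?_ ?_
    · refine Asymptotics.IsBigO.of_bound 1 (Eventually.of_forall fun v => ?_)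
      simp only [norm_pow, Real.norm_eq_abs, one_mul]
      refine pow_le_pow_left₀ (abs_nonneg _) ?_ 2
      rw [abs_of_nonneg (le_max_left _ _)]
      exact max_le (abs_nonneg _) (le_abs_self _)
    · exact Asymptotics.isLittleO_pow_id (by norm_num)
  · rw [max_eq_right h.le]
    have := hasDerivAt_pow 2 u
    refine HasDerivAt.congr_of_eventuallyEq (by simpa using this) ?_
    filter_upwards [lt_mem_nhds h] with v hv
    simp [max_eq_right (le_of_lt hv)]

lemma contDiff_max_sq : ContDiff ℝ 1 (fun u : ℝ => (max 0 u) ^ 2) := by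
  rw [contDiff_one_iff_deriv]
  refine ⟨fun u => (hasDerivAt_max_sq u).differentiableAt, ?_⟩
  rw [funext fun u => (hasDerivAt_max_sq u).deriv]
  fun_prop

/-! ### The cutoff function -/

section Cutoff
variable {n : ℕ} {R : ℝ} {x : EuclideanSpace ℝ (Fin n)}

lemma cutS_nonneg : 0 ≤ cutS R x := le_max_left _ _

lemma cutS_eq_zero (hR : 0 < R) (hx : R ≤ ‖x‖) : cutS R x = 0 := by
  refine max_eq_left ?_
  have : 1 ≤ ‖x‖ ^ 2 / R ^ 2 := by
    rw [one_le_div (by positivity)]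
    exact pow_le_pow_left₀ hR.le hx 2
  linarith

lemma cutS_pos (hR : 0 < R) (hx : ‖x‖ < R) : 0 < cutS R x := by
  refine lt_max_of_lt_right ?_
  have : ‖x‖ ^ 2 / R ^ 2 < 1 := by
    rw [div_lt_one (by positivity)]
    exact pow_lt_pow_left₀ hx (norm_nonneg _) (by norm_num)
  linarith

lemma cutS_mono {r : ℝ} (hr : 0 < r) (hrR : r ≤ R) : cutS r x ≤ cutS R x := by
  unfold cutS
  gcongr

lemma contDiff_cutS_sq : ContDiff ℝ 1 (fun x : EuclideanSpace ℝ (Fin n) => cutS R x ^ 2) :=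
  contDiff_max_sq.comp (contDiff_const.sub ((contDiff_norm_sq ℝ).div_const _))

lemma fderiv_cutS_sq (k : Fin n) :
    fderiv ℝ (fun x : EuclideanSpace ℝ (Fin n) => cutS R x ^ 2) x (EuclideanSpace.single k 1)
      = -(4 * cutS R x * x k / R ^ 2) := by
  have h1 : HasFDerivAt (fun y : EuclideanSpace ℝ (Fin n) => 1 - ‖y‖ ^ 2 / R ^ 2)
      (-((R ^ 2)⁻¹ • (2 • innerSL ℝ x))) x := by
    have := ((hasStrictFDerivAt_norm_sq x).hasFDerivAt.const_mul (R ^ 2)⁻¹).const_sub 1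
    simpa [div_eq_inv_mul] using this
  have h2 := (hasDerivAt_max_sq (1 - ‖x‖ ^ 2 / R ^ 2)).comp_hasFDerivAt x h1
  have h3 : fderiv ℝ (fun x : EuclideanSpace ℝ (Fin n) => cutS R x ^ 2) x = _ := h2.fderiv
  rw [h3]
  simp [EuclideanSpace.inner_single_right, cutS]
  ring

end Cutoff

/-! ### The energy field and its divergence -/

section Energy
variable {n : ℕ} {A : EuclideanSpace ℝ (Fin n) → Matrix (Fin n) (Fin n) ℂ}
  {w : EuclideanSpace ℝ (Fin n) → ℂ}

lemma contDiff_pdC (hw : ContDiff ℝ 2 w) (k : Fin n) : ContDiff ℝ 1 (fun x => pdC w x k) :=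
  (hw.fderiv_right (m := 1) (by norm_num)).clm_apply contDiff_const

lemma contDiff_flux (hA : ∀ k l : Fin n, ContDiff ℝ 1 fun x => A x k l) (hw : ContDiff ℝ 2 w)
    (k : Fin n) : ContDiff ℝ 1 (flux A w k) :=
  ContDiff.sum fun l _ => (hA k l).mul (contDiff_pdC hw l)

lemma continuous_gradSq (hw : ContDiff ℝ 2 w) : Continuous (gradSq w) :=
  continuous_finsetSum _ fun k _ => ((contDiff_pdC hw k).continuous.norm.pow 2)

lemma contDiff_coord (k : Fin n) : ContDiff ℝ 1 (fun x : EuclideanSpace ℝ (Fin n) => x k) := by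
  fun_prop

lemma contDiff_energyField (hA : ∀ k l : Fin n, ContDiff ℝ 1 fun x => A x k l)
    (hw : ContDiff ℝ 2 w) (R : ℝ) (k : Fin n) : ContDiff ℝ 1 (energyField A w R k) := by
  have hw1 : ContDiff ℝ 1 w := hw.of_le (by norm_num)
  exact contDiff_cutS_sq.mul ((hw1.inner ℝ (contDiff_flux hA hw k)).sub
    (contDiff_const.mul ((hw1.inner ℝ hw1).mul (contDiff_coord k))))

lemma hasCompactSupport_energyField {R : ℝ} (hR : 0 < R) (k : Fin n) :
    HasCompactSupport (energyField A w R k) := by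
  refine HasCompactSupport.intro (isCompact_closedBall 0 R) fun x hx => ?_
  have : R ≤ ‖x‖ := by
    simp only [Metric.mem_closedBall, dist_zero_right, not_le] at hx
    exact hx.le
  simp [energyField, cutS_eq_zero hR this]

lemma integral_fderiv_eq_zero {F : EuclideanSpace ℝ (Fin n) → ℝ} (hF : ContDiff ℝ 1 F)
    (hc : HasCompactSupport F) (v : EuclideanSpace ℝ (Fin n)) :
    Integrable (fun x => fderiv ℝ F x v) ∧ ∫ x, fderiv ℝ F x v = 0 := by
  have hi : Integrable (fun x => fderiv ℝ F x v) :=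
    ((hF.continuous_fderiv (by norm_num)).clm_apply continuous_const).integrable_of_hasCompactSupport
      (hc.fderiv_apply ℝ v)
  refine ⟨hi, ?_⟩
  have := integral_mul_fderiv_eq_neg_fderiv_mul_of_integrable (𝕜 := ℝ) (μ := volume)
    (f := fun _ : EuclideanSpace ℝ (Fin n) => (1 : ℝ)) (g := F) (v := v)
    (by simp) (by simpa using hi)
    (by simpa using hF.continuous.integrable_of_hasCompactSupport hc)
    (fun _ _ => differentiableAt_const _) (fun y _ => hF.differentiable (by norm_num) y)
  simpa using this

/-- The identity for the divergence of the energy field, after using the profile equation. -/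
lemma div_energyField (hA : ∀ k l : Fin n, ContDiff ℝ 1 fun x => A x k l)
    (hw : ContDiff ℝ 2 w) {μ : ℝ} (R : ℝ) (x : EuclideanSpace ℝ (Fin n))
    (heq : divAgrad A w x =
      (1 / 2) * (Complex.I * w x + (μ : ℂ) * w x + ∑ k, (x k : ℂ) * pdC w x k)) :
    ∑ k, fderiv ℝ (energyField A w R k) x (EuclideanSpace.single k 1) =
      cutS R x ^ 2 * (∑ k, inner ℝ (pdC w x k) (flux A w k x) + (μ / 2 - n / 4) * ‖w x‖ ^ 2)
      - ∑ k, 4 * cutS R x * x k / R ^ 2 * inner ℝ (w x) (flux A w k x)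
      + cutS R x / R ^ 2 * ‖w x‖ ^ 2 * ‖x‖ ^ 2 := by
  have hwd : DifferentiableAt ℝ w x := hw.differentiable (by norm_num) x
  have hfd : ∀ k, DifferentiableAt ℝ (flux A w k) x := fun k =>
    (contDiff_flux hA hw k).differentiable (by norm_num) x
  have hxd : ∀ k : Fin n, HasFDerivAt (fun y : EuclideanSpace ℝ (Fin n) => y k)
      (EuclideanSpace.proj k : EuclideanSpace ℝ (Fin n) →L[ℝ] ℝ) x := fun k =>
    (EuclideanSpace.proj k : EuclideanSpace ℝ (Fin n) →L[ℝ] ℝ).hasFDerivAt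
  have key : ∀ k, fderiv ℝ (energyField A w R k) x (EuclideanSpace.single k 1) =
      cutS R x ^ 2 * (inner ℝ (w x) (fderiv ℝ (flux A w k) x (EuclideanSpace.single k 1))
        + inner ℝ (pdC w x k) (flux A w k x)
        - 1 / 2 * (x k * inner ℝ (w x) (pdC w x k)) - 1 / 4 * ‖w x‖ ^ 2)
      - 4 * cutS R x * x k / R ^ 2 * inner ℝ (w x) (flux A w k x)
      + cutS R x / R ^ 2 * ‖w x‖ ^ 2 * (x k) ^ 2 := by
    intro k
    have hφ : HasFDerivAt (fun x : EuclideanSpace ℝ (Fin n) => cutS R x ^ 2) _ x :=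
      (contDiff_cutS_sq.differentiable (by norm_num) x).hasFDerivAt
    have h1 : HasFDerivAt (fun y => inner ℝ (w y) (flux A w k y)) _ x :=
      (hwd.inner ℝ (hfd k)).hasFDerivAt
    have h2 : HasFDerivAt (fun y => inner ℝ (w y) (w y)) _ x :=
      (hwd.inner ℝ hwd).hasFDerivAt
    have h : HasFDerivAt (energyField A w R k) _ x :=
      hφ.mul (h1.sub ((h2.mul (hxd k)).const_mul (1 / 4)))
    rw [h.fderiv]
    simp only [add_apply, smul_apply,
      sub_apply, fderiv_cutS_sq, fderiv_inner_apply ℝ hwd (hfd k),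
      fderiv_inner_apply ℝ hwd hwd, smul_eq_mul, PiLp.proj_apply,
      PiLp.single_apply, if_true]
    rw [real_inner_comm (w x) (fderiv ℝ w x (EuclideanSpace.single k 1))]
    simp only [pdC, real_inner_self_eq_norm_sq]
    ring
  have hdiv : ∑ k, inner ℝ (w x) (fderiv ℝ (flux A w k) x (EuclideanSpace.single k 1)) =
      1 / 2 * (μ * ‖w x‖ ^ 2) + 1 / 2 * ∑ k, x k * inner ℝ (w x) (pdC w x k) := by
    have e : ∑ k, fderiv ℝ (flux A w k) x (EuclideanSpace.single k 1) = divAgrad A w x := rfl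
    rw [← inner_sum, e, heq]
    have e2 : (1 / 2 : ℂ) * (Complex.I * w x + (μ : ℂ) * w x + ∑ k, (x k : ℂ) * pdC w x k)
      = (1 / 2 : ℝ) • (Complex.I * w x + μ • w x + ∑ k, x k • pdC w x k) := by
      simp [Complex.real_smul]
      ring
    have e3 : inner ℝ (w x) (Complex.I * w x) = 0 := by
      rw [Complex.inner]; simp; ring
    rw [e2, inner_smul_right, inner_add_right, inner_add_right, e3, inner_smul_right, inner_sum,
      real_inner_self_eq_norm_sq]
    simp only [inner_smul_right]
    ring
  rw [Finset.sum_congr rfl fun k _ => key k]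
  simp only [Finset.sum_add_distrib, Finset.sum_sub_distrib, ← Finset.mul_sum, hdiv,
    Finset.sum_const, Finset.card_univ, Fintype.card_fin, nsmul_eq_mul]
  rw [EuclideanSpace.real_norm_sq_eq x]
  ring

/-- The pointwise lower bound on the divergence of the energy field. -/
lemma div_energyField_ge (hA : ∀ k l : Fin n, ContDiff ℝ 1 fun x => A x k l)
    (hw : ContDiff ℝ 2 w) {μ lam Lam M : ℝ} (hμ : (n : ℝ) ≤ 2 * μ) (hlam : 0 < lam)
    (hLam : 0 < Lam) (hell : UniformlyElliptic A lam Lam)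
    {R : ℝ} (hR : 0 < R) (x : EuclideanSpace ℝ (Fin n))
    (heq : divAgrad A w x =
      (1 / 2) * (Complex.I * w x + (μ : ℂ) * w x + ∑ k, (x k : ℂ) * pdC w x k))
    (hdecay : ‖w x‖ ≤ M * (1 + ‖x‖) ^ (-μ)) :
    lam / 2 * (cutS R x ^ 2 * gradSq w x)
      - 8 * Lam ^ 2 * M ^ 2 / lam * ((1 + R) / R ^ 2) * (1 + ‖x‖) ^ (-((n : ℝ) + 1)) ≤
    ∑ k, fderiv ℝ (energyField A w R k) x (EuclideanSpace.single k 1) := by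
  rw [div_energyField hA hw R x heq]
  have hpos : (0 : ℝ) < 1 + ‖x‖ := by positivity
  have hs := cutS_nonneg (R := R) (x := x)
  rcases le_total R ‖x‖ with hx | hx
  · rw [cutS_eq_zero hR hx]
    have : 0 ≤ 8 * Lam ^ 2 * M ^ 2 / lam * ((1 + R) / R ^ 2) * (1 + ‖x‖) ^ (-((n : ℝ) + 1)) := by
      positivity
    simpa using this
  set s := cutS R x
  -- Ellipticity is applied to the conjugate gradient, since `hell` conjugates the second factor.
  have hE : lam * gradSq w x ≤ ∑ k, inner ℝ (pdC w x k) (flux A w k x) := by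
    have := (hell x (fun k => (starRingEnd ℂ) (pdC w x k))).1
    simp only [RCLike.norm_conj] at this
    refine this.trans (le_of_eq ?_)
    rw [Complex.re_sum]
    refine Finset.sum_congr rfl fun k _ => ?_
    rw [Complex.inner, flux, Finset.sum_mul]
    congr 1
    refine Finset.sum_congr rfl fun l _ => ?_
    simp
    ring
  have hB : ∑ k, ‖flux A w k x‖ ^ 2 ≤ Lam ^ 2 * gradSq w x := (hell x (fun k => pdC w x k)).2
  have hY : ∑ k, 4 * s * x k / R ^ 2 * inner ℝ (w x) (flux A w k x) ≤
      lam / 2 * (s ^ 2 * gradSq w x) + 8 * Lam ^ 2 / lam / R ^ 2 * ‖w x‖ ^ 2 := by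
    -- Young's inequality with weight `lam / (2 * Lam²)`, which absorbs half of the ellipticity.
    have hk : ∀ k, 4 * s * x k / R ^ 2 * inner ℝ (w x) (flux A w k x) ≤
        lam / (2 * Lam ^ 2) * s ^ 2 * ‖flux A w k x‖ ^ 2 +
          8 * Lam ^ 2 / lam / R ^ 4 * ‖w x‖ ^ 2 * x k ^ 2 := by
      intro k
      have h1 : 4 * s * x k / R ^ 2 * inner ℝ (w x) (flux A w k x) ≤
          4 * s * |x k| / R ^ 2 * (‖w x‖ * ‖flux A w k x‖) := by
        refine (le_abs_self _).trans ?_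
        rw [abs_mul, abs_div, abs_mul, abs_of_nonneg (by positivity : 0 ≤ 4 * s),
          abs_of_nonneg (by positivity : 0 ≤ R ^ 2)]
        gcongr
        exact abs_real_inner_le_norm _ _
      refine h1.trans ?_
      have h2 : lam / (2 * Lam ^ 2) * s ^ 2 * ‖flux A w k x‖ ^ 2 +
          8 * Lam ^ 2 / lam / R ^ 4 * ‖w x‖ ^ 2 * x k ^ 2
          - 4 * s * |x k| / R ^ 2 * (‖w x‖ * ‖flux A w k x‖)
          = lam / (2 * Lam ^ 2) *
            (s * ‖flux A w k x‖ - 4 * Lam ^ 2 / lam / R ^ 2 * ‖w x‖ * |x k|) ^ 2 := by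
        rw [← sq_abs (x k)]
        field_simp
        ring
      have h3 : 0 ≤ lam / (2 * Lam ^ 2) *
            (s * ‖flux A w k x‖ - 4 * Lam ^ 2 / lam / R ^ 2 * ‖w x‖ * |x k|) ^ 2 := by positivity
      linarith
    refine (Finset.sum_le_sum fun k _ => hk k).trans ?_
    rw [Finset.sum_add_distrib, ← Finset.mul_sum, ← Finset.mul_sum,
      ← EuclideanSpace.real_norm_sq_eq x]
    have h4 : lam / (2 * Lam ^ 2) * s ^ 2 * ∑ k, ‖flux A w k x‖ ^ 2 ≤
        lam / (2 * Lam ^ 2) * s ^ 2 * (Lam ^ 2 * gradSq w x) := by gcongr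
    have h5 : lam / (2 * Lam ^ 2) * s ^ 2 * (Lam ^ 2 * gradSq w x) =
        lam / 2 * (s ^ 2 * gradSq w x) := by field_simp
    have h6 : 8 * Lam ^ 2 / lam / R ^ 4 * ‖w x‖ ^ 2 * ‖x‖ ^ 2 ≤
        8 * Lam ^ 2 / lam / R ^ 4 * ‖w x‖ ^ 2 * R ^ 2 := by gcongr
    have h7 : 8 * Lam ^ 2 / lam / R ^ 4 * ‖w x‖ ^ 2 * R ^ 2 =
        8 * Lam ^ 2 / lam / R ^ 2 * ‖w x‖ ^ 2 := by field_simp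
    linarith
  have hW : ‖w x‖ ^ 2 ≤ M ^ 2 * ((1 + R) * (1 + ‖x‖) ^ (-((n : ℝ) + 1))) := by
    have h1 : ‖w x‖ ^ 2 ≤ (M * (1 + ‖x‖) ^ (-μ)) ^ 2 := by gcongr
    refine h1.trans ?_
    rw [mul_pow]
    gcongr
    have h2 : ((1 + ‖x‖) ^ (-μ)) ^ 2 = (1 + ‖x‖) ^ (-(2 * μ)) := by
      rw [← Real.rpow_natCast, ← Real.rpow_mul hpos.le]
      congr 1
      push_cast
      ring
    have h3 : (1 + ‖x‖) ^ (-(2 * μ)) ≤ (1 + ‖x‖) ^ (1 + -((n : ℝ) + 1)) :=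
      Real.rpow_le_rpow_of_exponent_le (by linarith [norm_nonneg x]) (by linarith)
    rw [h2]
    refine h3.trans ?_
    rw [Real.rpow_add hpos, Real.rpow_one]
    gcongr
  have h8 : 8 * Lam ^ 2 / lam / R ^ 2 * ‖w x‖ ^ 2 ≤ 8 * Lam ^ 2 / lam / R ^ 2 *
      (M ^ 2 * ((1 + R) * (1 + ‖x‖) ^ (-((n : ℝ) + 1)))) := by gcongr
  have h9 : 8 * Lam ^ 2 / lam / R ^ 2 * (M ^ 2 * ((1 + R) * (1 + ‖x‖) ^ (-((n : ℝ) + 1)))) =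
      8 * Lam ^ 2 * M ^ 2 / lam * ((1 + R) / R ^ 2) * (1 + ‖x‖) ^ (-((n : ℝ) + 1)) := by
    field_simp
  have h10 : 0 ≤ s ^ 2 * ((μ / 2 - n / 4) * ‖w x‖ ^ 2) := by
    have : 0 ≤ μ / 2 - n / 4 := by linarith
    positivity
  have h11 : 0 ≤ s / R ^ 2 * ‖w x‖ ^ 2 * ‖x‖ ^ 2 := by positivity
  have h12 : s ^ 2 * (lam * gradSq w x) ≤
      s ^ 2 * ∑ k, inner ℝ (pdC w x k) (flux A w k x) := by gcongr
  rw [mul_add]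
  linarith

lemma continuous_cut_gradSq (hw : ContDiff ℝ 2 w) (R : ℝ) :
    Continuous (fun x => cutS R x ^ 2 * gradSq w x) :=
  contDiff_cutS_sq.continuous.mul (continuous_gradSq hw)

lemma integrable_cut_gradSq (hw : ContDiff ℝ 2 w) {R : ℝ} (hR : 0 < R) :
    Integrable (fun x => cutS R x ^ 2 * gradSq w x) := by
  refine (continuous_cut_gradSq hw R).integrable_of_hasCompactSupport ?_
  refine HasCompactSupport.intro (isCompact_closedBall 0 R) fun x hx => ?_
  have : R ≤ ‖x‖ := by
    simp only [Metric.mem_closedBall, dist_zero_right, not_le] at hx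
    exact hx.le
  simp [cutS_eq_zero hR this]

lemma gradSq_nonneg (x : EuclideanSpace ℝ (Fin n)) : 0 ≤ gradSq w x := by
  unfold gradSq
  positivity

end Energy

/-! ### The Liouville theorem -/

/-- Theorem 1.3 of the paper, Liouville theorem: if `2μ ≥ n` and `w`
solves the self-similar profile equation on `ℝⁿ` with `|w| = O(|x|^{-μ})`, then `w ≡ 0`. -/
theorem stmt_16 (n : ℕ) (hn : 1 ≤ n) (μ : ℝ) (hμ : (n : ℝ) ≤ 2 * μ)
    (lam Lam : ℝ) (hlam : 0 < lam) (hLam : 0 < Lam)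
    (A : EuclideanSpace ℝ (Fin n) → Matrix (Fin n) (Fin n) ℂ)
    (hA : ∀ k l : Fin n, ContDiff ℝ 1 fun x => A x k l)
    (hell : UniformlyElliptic A lam Lam)
    (w : EuclideanSpace ℝ (Fin n) → ℂ) (hw : ContDiff ℝ 2 w)
    (heq : ∀ x, divAgrad A w x =
      (1 / 2) * (Complex.I * w x + (μ : ℂ) * w x + ∑ k, (x k : ℂ) * pdC w x k))
    (M : ℝ) (hM : 0 < M)
    (hdecay : ∀ x : EuclideanSpace ℝ (Fin n), ‖w x‖ ≤ M * (1 + ‖x‖) ^ (-μ)) :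
    ∀ x, w x = 0 := by
  have hI : Integrable (fun x : EuclideanSpace ℝ (Fin n) => (1 + ‖x‖) ^ (-((n : ℝ) + 1))) :=
    integrable_one_add_norm (by simp)
  set J := ∫ x : EuclideanSpace ℝ (Fin n), (1 + ‖x‖) ^ (-((n : ℝ) + 1))
  set K := 8 * Lam ^ 2 * M ^ 2 / lam
  have hbound : ∀ R : ℝ, 0 < R →
      lam / 2 * ∫ x, cutS R x ^ 2 * gradSq w x ≤ K * ((1 + R) / R ^ 2) * J := by
    intro R hR
    have hF := fun k => integral_fderiv_eq_zero (contDiff_energyField hA hw R k)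
      (hasCompactSupport_energyField hR k) (EuclideanSpace.single k 1)
    have h1 := integral_mono
      (((integrable_cut_gradSq hw hR).const_mul (lam / 2)).sub
        (hI.const_mul (K * ((1 + R) / R ^ 2))))
      (integrable_finsetSum Finset.univ fun k _ => (hF k).1)
      (fun x => div_energyField_ge hA hw hμ hlam hLam hell hR x (heq x) (hdecay x))
    rw [integral_finsetSum _ (fun k _ => (hF k).1), Finset.sum_eq_zero (fun k _ => (hF k).2)] at h1
    simp only [Pi.sub_apply] at h1
    rw [integral_sub ((integrable_cut_gradSq hw hR).const_mul (lam / 2))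
      (hI.const_mul (K * ((1 + R) / R ^ 2))), integral_const_mul, integral_const_mul] at h1
    linarith
  have hlim : Tendsto (fun R : ℝ => K * ((1 + R) / R ^ 2) * J) atTop (𝓝 0) := by
    have h1 : Tendsto (fun R : ℝ => (R⁻¹) ^ 2 + R⁻¹) atTop (𝓝 0) := by
      simpa using (tendsto_inv_atTop_zero.pow 2).add (tendsto_inv_atTop_zero (𝕜 := ℝ))
    have h2 : Tendsto (fun R : ℝ => (1 + R) / R ^ 2) atTop (𝓝 0) := by
      refine h1.congr' ?_
      filter_upwards [eventually_gt_atTop 0] with R hR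
      field_simp
    simpa using (h2.const_mul K).mul_const J
  have hzero : ∀ r : ℝ, 0 < r → ∫ x, cutS r x ^ 2 * gradSq w x = 0 := by
    intro r hr
    refine le_antisymm ?_ (integral_nonneg fun x => mul_nonneg (sq_nonneg _) (gradSq_nonneg x))
    have : lam / 2 * ∫ x, cutS r x ^ 2 * gradSq w x ≤ 0 := by
      refine ge_of_tendsto hlim ?_
      filter_upwards [eventually_ge_atTop r] with R hR
      refine le_trans ?_ (hbound R (hr.trans_le hR))
      refine mul_le_mul_of_nonneg_left ?_ (by positivity)
      refine integral_mono (integrable_cut_gradSq hw hr)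
        (integrable_cut_gradSq hw (hr.trans_le hR)) fun x => ?_
      exact mul_le_mul_of_nonneg_right
        (pow_le_pow_left₀ cutS_nonneg (cutS_mono hr hR) 2) (gradSq_nonneg x)
    by_contra! h
    have : 0 < lam / 2 * ∫ x, cutS r x ^ 2 * gradSq w x := by positivity
    linarith
  have hD : ∀ x k, pdC w x k = 0 := by
    intro x k
    have hr : 0 < ‖x‖ + 1 := by positivity
    have h0 := (integral_eq_zero_iff_of_nonneg
      (fun y => mul_nonneg (sq_nonneg _) (gradSq_nonneg y))
      (integrable_cut_gradSq hw hr)).1 (hzero _ hr)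
    have h1 := (Continuous.ae_eq_iff_eq volume (continuous_cut_gradSq hw _)
      continuous_const).1 h0
    have h2 : cutS (‖x‖ + 1) x ^ 2 * gradSq w x = 0 := congrFun h1 x
    have h3 := cutS_pos hr (x := x) (by linarith)
    have h4 : gradSq w x = 0 := by
      rcases mul_eq_zero.1 h2 with h | h
      · exact absurd h (by positivity)
      · exact h
    have h5 := (Finset.sum_eq_zero_iff_of_nonneg (fun k _ => by positivity)).1 h4 k
      (Finset.mem_univ k)
    simpa using h5
  intro x
  have h := heq x
  have hdiv : divAgrad A w x = 0 := by simp [divAgrad, hD]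
  rw [hdiv] at h
  simp only [hD, mul_zero, Finset.sum_const_zero, add_zero] at h
  -- The imaginary part of `i + μ` is `1`, so the factor does not vanish.
  have h2 : (Complex.I + μ) * w x = 0 := by linear_combination -2 * h
  rcases mul_eq_zero.1 h2 with h | h
  · have := congrArg Complex.im h
    simp at this
  · exact h
end
end

section
/- (Elliptic-regime Liouville theorem.) Let n ≥ 1 and let μ ≥ 0 satisfy 2μ ≥ n−2. Let λ, Λ > 0, let A be a C¹ matrix-valued map on ℝⁿ satisfying the uniform ellipticity condition with constants λ, Λ, and let w : ℝⁿ → ℂ be C² and satisfy the self-similar profile equation div(A∇w)(x) = (1/2)(i·w(x) + μ·w(x) + x·∇w(x)) for all x ∈ ℝⁿ. Suppose there exists M > 0 such that |w(x)| ≤ M(1+|x|)^{−μ} for all x ∈ ℝⁿ, and suppose w satisfies the monotonicity condition 2μ|w(x)|² + x·∇(|w|²)(x) ≥ 0 for all x ∈ ℝⁿ. Then w is identically zero. -/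
/-!
Testing the equation against `φ² w̄`, with `φ = φ_R` a cutoff equal to `1` on the ball of radius `R`
and supported in the ball of radius `2R`, and taking real parts gives
`∫ φ² Re(A∇w · ∇w̄) + ∫ φ² Re(w̄ div(A∇w)) = -2 Re ∫ φ w̄ ∇φ · A∇w`.
By the equation `Re(w̄ div(A∇w)) = (2μ|w|² + x·∇|w|²)/4`, which the monotonicity condition makes
nonnegative (`re_conj_mul_rhs_nonneg`), so ellipticity and Young's inequality yield
(`caccioppoli`)
`λ ∫ φ²|∇w|² ≤ Λ ε ∫_{R ≤ |x| < 2R} φ²|∇w|² + (Λ/ε) ∫_{R ≤ |x| < 2R} |w|²|∇φ|²`.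
The last integral is at most a multiple of `R^(n-2-2μ)`, hence bounded uniformly in `R ≥ 1`
(`decay_volume_le`).  In the critical case `2μ = n - 2` it need not tend to zero, so the inequality
is used twice (`energy_nonpos`): a small `ε` shows `∇w ∈ L²`, whereupon the annular energies tend
to `0` as `R → ∞`, and letting then `ε → ∞` gives `∫ |∇w|² = 0`.
Thus `∇w = 0`, and the equation reduces to `(i + μ) w = 0`.
-/

open scoped BigOperators

noncomputable section

open MeasureTheory Filter Topology Metric

/-! ### Cutoff functions and the divergence theorem -/

/-- Cutoffs at scale `R`, obtained by dilating one fixed smooth bump. -/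
theorem cutoff_exists (n : ℕ) : ∃ C : ℝ, ∀ R : ℝ, 1 ≤ R →
    ∃ φ : EuclideanSpace ℝ (Fin n) → ℝ, ContDiff ℝ 1 φ ∧ HasCompactSupport φ ∧
      (∀ x, 0 ≤ φ x) ∧ (∀ x, φ x ≤ 1) ∧ (∀ x ∈ ball (0 : EuclideanSpace ℝ (Fin n)) R, φ x = 1) ∧
      (∀ x ∉ ball (0 : EuclideanSpace ℝ (Fin n)) (2 * R), φ x = 0) ∧
      ∀ x, ‖fderiv ℝ φ x‖ ≤ C / R := by
  let f : ContDiffBump (0 : EuclideanSpace ℝ (Fin n)) := ⟨1, 2, one_pos, one_lt_two⟩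
  have hf : ContDiff ℝ 1 f := f.contDiff
  obtain ⟨C, hC⟩ := (f.hasCompactSupport.fderiv (𝕜 := ℝ)).exists_bound_of_continuous
    (hf.continuous_fderiv one_ne_zero)
  refine ⟨C, fun R hR => ?_⟩
  have hR0 : 0 < R := by linarith
  refine ⟨fun x => f (R⁻¹ • x), hf.comp (contDiff_const_smul _),
    f.hasCompactSupport.comp_smul (inv_ne_zero hR0.ne'), fun x => f.nonneg, fun x => f.le_one,
    fun x hx => ?_, fun x hx => ?_, fun x => ?_⟩
  · apply f.one_of_mem_closedBall
    rw [mem_ball_zero_iff] at hx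
    rw [mem_closedBall_zero_iff, norm_smul, Real.norm_of_nonneg (by positivity)]
    change R⁻¹ * ‖x‖ ≤ 1
    rw [inv_mul_le_iff₀ hR0]; linarith
  · apply f.zero_of_le_dist
    rw [mem_ball_zero_iff, not_lt] at hx
    rw [dist_zero_right, norm_smul, Real.norm_of_nonneg (by positivity)]
    change 2 ≤ R⁻¹ * ‖x‖
    rw [le_inv_mul_iff₀ hR0]; linarith
  · have h1 : HasFDerivAt (fun x => f (R⁻¹ • x)) ((fderiv ℝ f (R⁻¹ • x)).comp
        (R⁻¹ • ContinuousLinearMap.id ℝ (EuclideanSpace ℝ (Fin n)))) x :=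
      ((hf.differentiable one_ne_zero) _).hasFDerivAt.comp x ((hasFDerivAt_id x).const_smul R⁻¹)
    rw [h1.fderiv, ContinuousLinearMap.comp_smul, ContinuousLinearMap.comp_id, norm_smul,
      Real.norm_of_nonneg (by positivity), div_eq_inv_mul]
    gcongr
    exact hC _

/-- The divergence of a compactly supported `C¹` field `u F` integrates to zero. -/
theorem integral_div_mul {n : ℕ} {u : EuclideanSpace ℝ (Fin n) → ℂ}
    {F : Fin n → EuclideanSpace ℝ (Fin n) → ℂ} (hu : ContDiff ℝ 1 u) (hcs : HasCompactSupport u)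
    (hF : ∀ k, ContDiff ℝ 1 (F k)) (e : Fin n → EuclideanSpace ℝ (Fin n)) :
    Integrable (fun x => ∑ k, (u x * fderiv ℝ (F k) x (e k) + fderiv ℝ u x (e k) * F k x)) ∧
      ∫ x, ∑ k, (u x * fderiv ℝ (F k) x (e k) + fderiv ℝ u x (e k) * F k x) = 0 := by
  have hud := hu.continuous_fderiv one_ne_zero
  have h1 : ∀ k, Integrable (fun x => u x * fderiv ℝ (F k) x (e k)) := fun k =>
    (hu.continuous.mul (((hF k).continuous_fderiv one_ne_zero).clm_apply
      continuous_const)).integrable_of_hasCompactSupport hcs.mul_right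
  have h2 : ∀ k, Integrable (fun x => fderiv ℝ u x (e k) * F k x) := fun k =>
    ((hud.clm_apply continuous_const).mul (hF k).continuous).integrable_of_hasCompactSupport
      (hcs.fderiv_apply (𝕜 := ℝ) (e k)).mul_right
  have h3 : ∀ k, Integrable (fun x => u x * F k x) := fun k =>
    (hu.continuous.mul (hF k).continuous).integrable_of_hasCompactSupport hcs.mul_right
  refine ⟨integrable_finsetSum _ fun k _ => (h1 k).add (h2 k), ?_⟩
  rw [integral_finsetSum Finset.univ (f := fun k x =>
    u x * fderiv ℝ (F k) x (e k) + fderiv ℝ u x (e k) * F k x) fun k _ => (h1 k).add (h2 k)]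
  refine Finset.sum_eq_zero fun k _ => ?_
  rw [integral_add (h1 k) (h2 k), integral_mul_fderiv_eq_neg_fderiv_mul_of_integrable (h2 k) (h1 k)
    (h3 k) (fun x _ => hu.differentiable one_ne_zero x)
    (fun x _ => (hF k).differentiable one_ne_zero x), neg_add_cancel]

/-! ### The Caccioppoli inequality -/

theorem norm_sq_sum_mul_le {n : ℕ} (c : Fin n → ℝ) (F : Fin n → ℂ) :
    ‖∑ k, (c k : ℂ) * F k‖ ^ 2 ≤ (∑ k, c k ^ 2) * ∑ k, ‖F k‖ ^ 2 := by
  calc ‖∑ k, (c k : ℂ) * F k‖ ^ 2 ≤ (∑ k, |c k| * ‖F k‖) ^ 2 := by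
        gcongr
        refine (norm_sum_le _ _).trans (le_of_eq ?_)
        simp
    _ ≤ _ := by
        simpa using Finset.sum_mul_sq_le_sq_mul_sq Finset.univ (fun k => |c k|) (fun k => ‖F k‖)

/-- The pointwise form of the energy inequality: ellipticity bounds the quadratic term from below,
and Young's inequality with parameter `ε` splits the cross term. -/
theorem pointwise_bound {n : ℕ} {lam Lam ε φ c : ℝ} (hLam : 0 < Lam) (hε : 0 < ε) (hφ : 0 ≤ φ)
    (g : Fin n → ℝ) (w : ℂ) (p F : Fin n → ℂ) (dv : ℂ) (hdv : 0 ≤ (starRingEnd ℂ w * dv).re)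
    (hell : lam * ∑ k, ‖p k‖ ^ 2 ≤ (∑ k, starRingEnd ℂ (p k) * F k).re)
    (hF : ∑ k, ‖F k‖ ^ 2 ≤ Lam ^ 2 * ∑ k, ‖p k‖ ^ 2)
    (hc : ‖w‖ ^ 2 * ∑ k, g k ^ 2 ≤ c) :
    lam * (φ ^ 2 * ∑ k, ‖p k‖ ^ 2) -
        (Lam * ε * (φ ^ 2 * ∑ k, ‖p k‖ ^ 2) + Lam / ε * c) ≤
      ((φ ^ 2 : ℂ) * (starRingEnd ℂ w * dv) + (φ ^ 2 : ℂ) * (∑ k, starRingEnd ℂ (p k) * F k) +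
        (2 * φ : ℂ) * (starRingEnd ℂ w * ∑ k, (g k : ℂ) * F k)).re := by
  set h := ∑ k, ‖p k‖ ^ 2
  set T := ∑ k, (g k : ℂ) * F k
  have hh : 0 ≤ h := by positivity
  have hT : (‖w‖ * ‖T‖) ^ 2 ≤ c * (Lam ^ 2 * h) := by
    have := norm_sq_sum_mul_le g F
    calc (‖w‖ * ‖T‖) ^ 2 = ‖w‖ ^ 2 * ‖T‖ ^ 2 := by ring
      _ ≤ ‖w‖ ^ 2 * ((∑ k, g k ^ 2) * (Lam ^ 2 * h)) := by gcongr; exact this.trans (by gcongr)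
      _ = (‖w‖ ^ 2 * ∑ k, g k ^ 2) * (Lam ^ 2 * h) := by ring
      _ ≤ _ := by gcongr
  have hc0 : 0 ≤ c := le_trans (by positivity) hc
  have hcross : 2 * φ * (‖w‖ * ‖T‖) ≤ Lam * ε * (φ ^ 2 * h) + Lam / ε * c := by
    apply abs_le_of_sq_le_sq' _ (by positivity) |>.2
    calc (2 * φ * (‖w‖ * ‖T‖)) ^ 2 = 4 * φ ^ 2 * (‖w‖ * ‖T‖) ^ 2 := by ring
      _ ≤ 4 * φ ^ 2 * (c * (Lam ^ 2 * h)) := by gcongr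
      _ = 4 * (Lam * ε * (φ ^ 2 * h)) * (Lam / ε * c) := by field_simp
      _ ≤ _ := by nlinarith [sq_nonneg (Lam * ε * (φ ^ 2 * h) - Lam / ε * c)]
  have hre : -(2 * φ * (‖w‖ * ‖T‖)) ≤ ((2 * φ : ℂ) * (starRingEnd ℂ w * T)).re := by
    have h1 := Complex.abs_re_le_norm ((2 * φ : ℂ) * (starRingEnd ℂ w * T))
    have h2 : ‖(2 * φ : ℂ) * (starRingEnd ℂ w * T)‖ = 2 * φ * (‖w‖ * ‖T‖) := by
      simp [abs_of_nonneg hφ]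
    rw [h2] at h1
    exact (abs_le.1 h1).1
  have e1 : ∀ z : ℂ, ((φ ^ 2 : ℂ) * z).re = φ ^ 2 * z.re := fun z => by
    rw [← Complex.ofReal_pow, Complex.re_ofReal_mul]
  rw [Complex.add_re, Complex.add_re, e1, e1]
  have := mul_nonneg (sq_nonneg φ) hdv
  have := mul_le_mul_of_nonneg_left hell (sq_nonneg φ)
  nlinarith

/-- The Caccioppoli inequality with the cross term localised to the annulus where the cutoff
is not locally constant. -/
theorem caccioppoli {n : ℕ} {lam Lam ε c R : ℝ} (hLam : 0 < Lam) (hε : 0 < ε)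
    (F : Fin n → EuclideanSpace ℝ (Fin n) → ℂ) (hF : ∀ k, ContDiff ℝ 1 (F k))
    (w : EuclideanSpace ℝ (Fin n) → ℂ) (hw : ContDiff ℝ 2 w)
    (hdv : ∀ x, 0 ≤ (starRingEnd ℂ (w x) *
      ∑ k, fderiv ℝ (F k) x (EuclideanSpace.single k 1)).re)
    (hell : ∀ x, lam * ∑ k, ‖pdC w x k‖ ^ 2 ≤ (∑ k, starRingEnd ℂ (pdC w x k) * F k x).re)
    (hFb : ∀ x, ∑ k, ‖F k x‖ ^ 2 ≤ Lam ^ 2 * ∑ k, ‖pdC w x k‖ ^ 2)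
    (φ : EuclideanSpace ℝ (Fin n) → ℝ) (hφ : ContDiff ℝ 1 φ) (hcs : HasCompactSupport φ)
    (hφ0 : ∀ x, 0 ≤ φ x) (hφ1 : ∀ x ∈ ball (0 : EuclideanSpace ℝ (Fin n)) R, φ x = 1)
    (hφ2 : ∀ x ∉ ball (0 : EuclideanSpace ℝ (Fin n)) (2 * R), φ x = 0)
    (hc : ∀ x ∈ ball (0 : EuclideanSpace ℝ (Fin n)) (2 * R) \ ball 0 R,
      ‖w x‖ ^ 2 * ∑ k, (fderiv ℝ φ x (EuclideanSpace.single k 1)) ^ 2 ≤ c) :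
    lam * ∫ x, φ x ^ 2 * ∑ k, ‖pdC w x k‖ ^ 2 ≤
      Lam * ε * (∫ x in ball 0 (2 * R) \ ball 0 R, φ x ^ 2 * ∑ k, ‖pdC w x k‖ ^ 2) +
      Lam / ε * c * volume.real (ball (0 : EuclideanSpace ℝ (Fin n)) (2 * R) \ ball 0 R) := by
  have hpc : ∀ k, Continuous fun x => pdC w x k := fun k =>
    (hw.continuous_fderiv two_ne_zero).clm_apply continuous_const
  set H : EuclideanSpace ℝ (Fin n) → ℝ := fun x => φ x ^ 2 * ∑ k, ‖pdC w x k‖ ^ 2 with hH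
  set S : Set (EuclideanSpace ℝ (Fin n)) := ball 0 (2 * R) \ ball 0 R with hS
  have hSm : MeasurableSet S := measurableSet_ball.diff measurableSet_ball
  have hSf : volume S ≠ ⊤ := ((measure_mono Set.sdiff_subset).trans_lt measure_ball_lt_top).ne
  have hHint : Integrable H := by
    refine Continuous.integrable_of_hasCompactSupport ?_ ?_
    · exact (hφ.continuous.pow 2).mul (continuous_finsetSum _ fun k _ => (hpc k).norm.pow 2)
    · refine HasCompactSupport.mul_right ?_
      exact hcs.comp_left (g := fun t : ℝ => t ^ 2) (by simp)
  set u : EuclideanSpace ℝ (Fin n) → ℂ := fun x => ((φ x : ℂ) ^ 2) * starRingEnd ℂ (w x) with hu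
  have hφd : ∀ x, HasFDerivAt (fun y => (φ y : ℂ)) (Complex.ofRealCLM.comp (fderiv ℝ φ x)) x :=
    fun x => Complex.ofRealCLM.hasFDerivAt.comp x (hφ.differentiable one_ne_zero x).hasFDerivAt
  have hwd : ∀ x, HasFDerivAt (fun y => starRingEnd ℂ (w y))
      ((Complex.conjCLE : ℂ →L[ℝ] ℂ).comp (fderiv ℝ w x)) x :=
    fun x => (Complex.conjCLE : ℂ →L[ℝ] ℂ).hasFDerivAt.comp x
      (hw.differentiable two_ne_zero x).hasFDerivAt
  have hucd : ContDiff ℝ 1 u :=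
    ((Complex.ofRealCLM.contDiff.comp hφ).pow 2).mul
      ((Complex.conjCLE : ℂ →L[ℝ] ℂ).contDiff.comp (hw.of_le one_le_two))
  have hucs : HasCompactSupport u := by
    refine HasCompactSupport.mul_right ?_
    exact hcs.comp_left (g := fun t : ℝ => (t : ℂ) ^ 2) (by simp)
  have hud : ∀ x k, fderiv ℝ u x (EuclideanSpace.single k 1) =
      (2 * φ x : ℂ) * (fderiv ℝ φ x (EuclideanSpace.single k 1) : ℝ) * starRingEnd ℂ (w x) +
      (φ x : ℂ) ^ 2 * starRingEnd ℂ (pdC w x k) := by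
    intro x k
    have := ((hφd x).pow 2).mul (hwd x)
    rw [show fderiv ℝ u x = _ from this.fderiv]
    simp [pdC]
    ring
  obtain ⟨hDi, hD0⟩ := integral_div_mul hucd hucs hF (fun k => EuclideanSpace.single k 1)
  have hDeq : ∀ x, ∑ k, (u x * fderiv ℝ (F k) x (EuclideanSpace.single k 1) +
      fderiv ℝ u x (EuclideanSpace.single k 1) * F k x) =
      (φ x ^ 2 : ℂ) * (starRingEnd ℂ (w x) *
        ∑ k, fderiv ℝ (F k) x (EuclideanSpace.single k 1)) +
      (φ x ^ 2 : ℂ) * (∑ k, starRingEnd ℂ (pdC w x k) * F k x) +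
        (2 * φ x : ℂ) * (starRingEnd ℂ (w x) *
          ∑ k, ((fderiv ℝ φ x (EuclideanSpace.single k 1) : ℝ) : ℂ) * F k x) := by
    intro x
    simp only [Finset.mul_sum, ← Finset.sum_add_distrib]
    refine Finset.sum_congr rfl fun k _ => ?_
    rw [hud, hu]
    ring
  have hpt : ∀ x, lam * H x - S.indicator (fun x => Lam * ε * H x + Lam / ε * c) x ≤
      (∑ k, (u x * fderiv ℝ (F k) x (EuclideanSpace.single k 1) +
      fderiv ℝ u x (EuclideanSpace.single k 1) * F k x)).re := by
    intro x
    rw [hDeq]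
    by_cases hxS : x ∈ S
    · rw [Set.indicator_of_mem hxS]
      exact pointwise_bound hLam hε (hφ0 x) _ _ _ _ _ (hdv x) (hell x) (hFb x) (hc x hxS)
    rw [Set.indicator_of_notMem hxS, sub_zero]
    -- Off the annulus the cross term vanishes, since either `∇φ = 0` or `φ = 0`.
    have hcr : (2 * φ x : ℂ) * (starRingEnd ℂ (w x) *
          ∑ k, ((fderiv ℝ φ x (EuclideanSpace.single k 1) : ℝ) : ℂ) * F k x) = 0 := by
      by_cases hxR : x ∈ ball (0 : EuclideanSpace ℝ (Fin n)) R
      · have : φ =ᶠ[𝓝 x] fun _ => 1 := by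
          filter_upwards [isOpen_ball.mem_nhds hxR] with y hy using hφ1 y hy
        simp [this.fderiv_eq]
      · have : φ x = 0 := hφ2 x fun h => hxS ⟨h, hxR⟩
        simp [this]
    have e1 : ∀ z : ℂ, ((φ x ^ 2 : ℂ) * z).re = φ x ^ 2 * z.re := fun z => by
      rw [← Complex.ofReal_pow, Complex.re_ofReal_mul]
    rw [hcr, add_zero, Complex.add_re, e1, e1]
    have h1 := mul_nonneg (sq_nonneg (φ x)) (hdv x)
    have h2 := mul_le_mul_of_nonneg_left (hell x) (sq_nonneg (φ x))
    simp only [hH]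
    nlinarith
  have hIS : IntegrableOn (fun x => Lam * ε * H x + Lam / ε * c) S :=
    (hHint.integrableOn.const_mul _).add (integrableOn_const hSf)
  have hmono := integral_mono ((hHint.const_mul lam).sub (hIS.integrable_indicator hSm))
    hDi.re hpt
  have hre : ∫ x, RCLike.re (∑ k, (u x * fderiv ℝ (F k) x (EuclideanSpace.single k 1) +
      fderiv ℝ u x (EuclideanSpace.single k 1) * F k x)) = 0 := by
    rw [integral_re hDi, hD0]; simp
  rw [hre] at hmono
  simp only [Pi.sub_apply] at hmono
  rw [integral_sub (hHint.const_mul lam) (hIS.integrable_indicator hSm),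
    integral_indicator hSm, integral_add (hHint.integrableOn.const_mul _)
    (integrableOn_const hSf), integral_const_mul, integral_const_mul, setIntegral_const,
    smul_eq_mul] at hmono
  linarith

/-! ### Vanishing of the total energy -/

/-- The energies `H R` over balls are bounded, by absorbing with small `ε`, hence converge;
then the annular energies `H (2R) - H R` tend to `0`, and letting `ε → ∞` forces the limit to be
nonpositive. -/
theorem energy_nonpos {H G I : ℝ → ℝ} {lam Lam K : ℝ} (hlam : 0 < lam) (hLam : 0 < Lam)
    (hmono : Monotone H) (hHG : ∀ R, 1 ≤ R → H R ≤ G R)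
    (hIG : ∀ R, 1 ≤ R → I R ≤ G R) (hIH : ∀ R, 1 ≤ R → I R ≤ H (2 * R) - H R)
    (hmain : ∀ R, 1 ≤ R → ∀ ε, 0 < ε → lam * G R ≤ Lam * ε * I R + Lam / ε * K) :
    ∀ R, H R ≤ 0 := by
  have hb : ∀ R, H R ≤ 4 * Lam ^ 2 * K / lam ^ 2 := by
    intro R
    have hR := le_max_right R 1
    have h1 := hmain _ hR (lam / (2 * Lam)) (by positivity)
    have e1 : Lam * (lam / (2 * Lam)) = lam / 2 := by field_simp
    have e2 : Lam / (lam / (2 * Lam)) = 2 * Lam ^ 2 / lam := by field_simp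
    rw [e1, e2] at h1
    have h2 := mul_le_mul_of_nonneg_left (hIG _ hR) (by positivity : 0 ≤ lam / 2)
    have h3 := hHG _ hR
    have h4 := hmono (le_max_left R 1)
    have h5 : lam / 2 * G (max R 1) ≤ 2 * Lam ^ 2 / lam * K := by linarith
    have h6 : G (max R 1) ≤ 4 * Lam ^ 2 * K / lam ^ 2 := by
      rw [le_div_iff₀ (by positivity)]
      have := mul_le_mul_of_nonneg_left h5 (by positivity : 0 ≤ 2 * lam)
      have e3 : 2 * lam * (2 * Lam ^ 2 / lam * K) = 4 * Lam ^ 2 * K := by field_simp; ring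
      rw [e3] at this
      linarith
    linarith
  have hbdd : BddAbove (Set.range H) := ⟨_, by rintro _ ⟨R, rfl⟩; exact hb R⟩
  have hlim := tendsto_atTop_ciSup hmono hbdd
  set L := ⨆ R, H R
  have hlim2 : Tendsto (fun R => H (2 * R)) atTop (𝓝 L) :=
    hlim.comp (tendsto_id.const_mul_atTop two_pos)
  have hL : ∀ ε, 0 < ε → lam * L ≤ Lam / ε * K := by
    intro ε hε
    have h1 : Tendsto (fun R => Lam * ε * (H (2 * R) - H R) + Lam / ε * K) atTop
        (𝓝 (Lam * ε * (L - L) + Lam / ε * K)) :=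
      ((hlim2.sub hlim).const_mul _).add_const _
    rw [sub_self, mul_zero, zero_add] at h1
    refine le_of_tendsto_of_tendsto (hlim.const_mul lam) h1 ?_
    filter_upwards [eventually_ge_atTop 1] with R hR
    have := mul_le_mul_of_nonneg_left (hHG R hR) hlam.le
    have := mul_le_mul_of_nonneg_left (hIH R hR) (by positivity : 0 ≤ Lam * ε)
    linarith [hmain R hR ε hε]
  have hL0 : L ≤ 0 := by
    have h1 : Tendsto (fun ε : ℝ => Lam / ε * K) atTop (𝓝 (0 * K)) :=
      (tendsto_id.const_div_atTop Lam).mul_const K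
    rw [zero_mul] at h1
    have : lam * L ≤ 0 := ge_of_tendsto h1 (by
      filter_upwards [eventually_gt_atTop 0] with ε hε using hL ε hε)
    exact nonpos_of_mul_nonpos_right this hlam
  exact fun R => (le_ciSup hbdd R).trans hL0

/-- This is where `n - 2 ≤ 2μ` enters: the squared decay of `w`, the squared gradient `C²/R²` of
the cutoff and the volume of the annulus balance. -/
theorem decay_volume_le {n : ℕ} {μ M C : ℝ} (hμ : (n : ℝ) - 2 ≤ 2 * μ) :
    ∃ K : ℝ, ∀ R : ℝ, 1 ≤ R →
      (M * R ^ (-μ)) ^ 2 * (n * (C / R) ^ 2) *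
        volume.real (ball (0 : EuclideanSpace ℝ (Fin n)) (2 * R) \ ball 0 R) ≤ K := by
  refine ⟨M ^ 2 * (n * C ^ 2) * (2 ^ n * volume.real (ball (0 : EuclideanSpace ℝ (Fin n)) 1)),
    fun R hR => ?_⟩
  have hR0 : 0 < R := by linarith
  set v := volume.real (ball (0 : EuclideanSpace ℝ (Fin n)) 1)
  have hv : volume.real (ball (0 : EuclideanSpace ℝ (Fin n)) (2 * R) \ ball 0 R) ≤
      (2 * R) ^ n * v := by
    refine (measureReal_mono Set.sdiff_subset measure_ball_lt_top.ne).trans (le_of_eq ?_)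
    rw [measureReal_def, Measure.addHaar_ball_of_pos _ _ (by positivity), ENNReal.toReal_mul,
      ENNReal.toReal_ofReal (by positivity)]
    simp [v, measureReal_def]
  have hp : (R ^ (-μ)) ^ 2 * (R⁻¹ ^ 2 * R ^ n) ≤ 1 := by
    have e : (R ^ (-μ)) ^ 2 * (R⁻¹ ^ 2 * R ^ n) = R ^ ((n : ℝ) - 2 - 2 * μ) := by
      have h1 : (R ^ (-μ)) ^ 2 = R ^ (-(2 * μ)) := by
        rw [← Real.rpow_natCast, ← Real.rpow_mul hR0.le]; congr 1; push_cast; ring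
      have h2 : R⁻¹ ^ 2 = R ^ (-2 : ℝ) := by
        rw [Real.rpow_neg hR0.le, inv_pow]; norm_cast
      rw [h1, h2, ← Real.rpow_natCast, ← Real.rpow_add hR0, ← Real.rpow_add hR0]
      congr 1; ring
    rw [e]
    exact Real.rpow_le_one_of_one_le_of_nonpos hR (by linarith)
  calc _ ≤ (M * R ^ (-μ)) ^ 2 * (n * (C / R) ^ 2) * ((2 * R) ^ n * v) := by gcongr
    _ = M ^ 2 * (n * C ^ 2) * (2 ^ n * v) * ((R ^ (-μ)) ^ 2 * (R⁻¹ ^ 2 * R ^ n)) := by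
        rw [mul_pow 2 R, div_eq_mul_inv]; ring
    _ ≤ _ := mul_le_of_le_one_right (by positivity) hp

/-! ### Sign of the right-hand side -/

/-- The monotonicity condition is the sign of `Re (w̄ div(A∇w))`, read through the equation. -/
theorem re_conj_mul_rhs_nonneg {n : ℕ} {μ : ℝ} {w : EuclideanSpace ℝ (Fin n) → ℂ}
    (hw : Differentiable ℝ w) (x : EuclideanSpace ℝ (Fin n))
    (hmono : 0 ≤ 2 * μ * ‖w x‖ ^ 2 +
        ∑ k, x k * fderiv ℝ (fun y => ‖w y‖ ^ 2) x (EuclideanSpace.single k 1)) :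
    0 ≤ (starRingEnd ℂ (w x) *
      ((1 / 2) * (Complex.I * w x + (μ : ℂ) * w x + ∑ k, (x k : ℂ) * pdC w x k))).re := by
  have h1 : ∀ k, fderiv ℝ (fun y => ‖w y‖ ^ 2) x (EuclideanSpace.single k 1) =
      2 * (starRingEnd ℂ (w x) * pdC w x k).re := by
    intro k
    rw [((hw x).hasFDerivAt.norm_sq).fderiv]
    simp [pdC, Complex.inner]
    ring
  have h2 : (starRingEnd ℂ (w x) * ∑ k, (x k : ℂ) * pdC w x k).re =
      ∑ k, x k * (starRingEnd ℂ (w x) * pdC w x k).re := by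
    rw [Finset.mul_sum, Complex.re_sum]
    refine Finset.sum_congr rfl fun k _ => ?_
    rw [← Complex.re_ofReal_mul]
    congr 1; ring
  have h3 : starRingEnd ℂ (w x) *
      ((1 / 2) * (Complex.I * w x + (μ : ℂ) * w x + ∑ k, (x k : ℂ) * pdC w x k)) =
      ((1 / 2 : ℝ) : ℂ) * (((‖w x‖ ^ 2 : ℝ) : ℂ) * (Complex.I + μ) +
        starRingEnd ℂ (w x) * ∑ k, (x k : ℂ) * pdC w x k) := by
    have : ((‖w x‖ ^ 2 : ℝ) : ℂ) = starRingEnd ℂ (w x) * w x := by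
      rw [Complex.conj_mul']; push_cast; rfl
    rw [this]; push_cast; ring
  rw [h3, Complex.re_ofReal_mul, Complex.add_re, Complex.re_ofReal_mul, h2]
  simp only [h1] at hmono
  have h4 : ∑ k, x k * (2 * (starRingEnd ℂ (w x) * pdC w x k).re) =
      2 * ∑ k, x k * (starRingEnd ℂ (w x) * pdC w x k).re := by
    rw [Finset.mul_sum]; exact Finset.sum_congr rfl fun k _ => by ring
  rw [h4] at hmono
  simp only [Complex.add_re, Complex.I_re, Complex.ofReal_re]
  linarith

/-! ### The Liouville theorem -/

/-- Theorem 1.4 of the paper, elliptic-regime Liouville theorem: if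
`μ ≥ 0`, `2μ ≥ n - 2`, `w` solves the self-similar profile equation with
`|w| = O(|x|^{-μ})`, and `w` satisfies the monotonicity condition
`2μ|w|² + x·∇(|w|²) ≥ 0`, then `w ≡ 0`. -/
theorem stmt_19 (n : ℕ) (hn : 1 ≤ n) (μ : ℝ) (hμ0 : 0 ≤ μ) (hμ : (n : ℝ) - 2 ≤ 2 * μ)
    (lam Lam : ℝ) (hlam : 0 < lam) (hLam : 0 < Lam)
    (A : EuclideanSpace ℝ (Fin n) → Matrix (Fin n) (Fin n) ℂ)
    (hA : ∀ k l : Fin n, ContDiff ℝ 1 fun x => A x k l)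
    (hell : UniformlyElliptic A lam Lam)
    (w : EuclideanSpace ℝ (Fin n) → ℂ) (hw : ContDiff ℝ 2 w)
    (heq : ∀ x, divAgrad A w x =
      (1 / 2) * (Complex.I * w x + (μ : ℂ) * w x + ∑ k, (x k : ℂ) * pdC w x k))
    (M : ℝ) (hM : 0 < M)
    (hdecay : ∀ x : EuclideanSpace ℝ (Fin n), ‖w x‖ ≤ M * (1 + ‖x‖) ^ (-μ))
    (hmono : ∀ x : EuclideanSpace ℝ (Fin n),
      0 ≤ 2 * μ * ‖w x‖ ^ 2 +
        ∑ k, x k * fderiv ℝ (fun y => ‖w y‖ ^ 2) x (EuclideanSpace.single k 1)) :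
    ∀ x, w x = 0 := by
  have hpd : ∀ k, ContDiff ℝ 1 fun x => pdC w x k := fun k =>
    (hw.fderiv_right (m := 1) (by norm_num)).clm_apply contDiff_const
  set F : Fin n → EuclideanSpace ℝ (Fin n) → ℂ := fun k y => ∑ l, A y k l * pdC w y l with hFdef
  have hF : ∀ k, ContDiff ℝ 1 (F k) := fun k =>
    ContDiff.sum fun l _ => (hA k l).mul (hpd l)
  have hdv : ∀ x, 0 ≤ (starRingEnd ℂ (w x) *
      ∑ k, fderiv ℝ (F k) x (EuclideanSpace.single k 1)).re := by
    intro x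
    have : ∑ k, fderiv ℝ (F k) x (EuclideanSpace.single k 1) = divAgrad A w x := rfl
    rw [this, heq]
    exact re_conj_mul_rhs_nonneg (hw.differentiable two_ne_zero) x (hmono x)
  have hell1 : ∀ x, lam * ∑ k, ‖pdC w x k‖ ^ 2 ≤
      (∑ k, starRingEnd ℂ (pdC w x k) * F k x).re := by
    intro x
    -- The quadratic form puts the conjugate on the second index, so it is tested on `p = conj ∇w`.
    have := (hell x (fun k => starRingEnd ℂ (pdC w x k))).1
    simp only [RCLike.norm_conj, Complex.conj_conj] at this
    refine this.trans (le_of_eq ?_)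
    congr 1
    refine Finset.sum_congr rfl fun k _ => ?_
    rw [hFdef, Finset.mul_sum]
    exact Finset.sum_congr rfl fun l _ => by ring
  have hFb : ∀ x, ∑ k, ‖F k x‖ ^ 2 ≤ Lam ^ 2 * ∑ k, ‖pdC w x k‖ ^ 2 := fun x =>
    (hell x (pdC w x)).2
  set h : EuclideanSpace ℝ (Fin n) → ℝ := fun x => ∑ k, ‖pdC w x k‖ ^ 2 with hh
  have hh0 : ∀ x, 0 ≤ h x := fun x => by positivity
  have hhc : Continuous h := continuous_finsetSum _ fun k _ => (hpd k).continuous.norm.pow 2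
  have hhi : ∀ r : ℝ, IntegrableOn h (ball 0 r) := fun r =>
    (hhc.locallyIntegrable.integrableOn_isCompact (isCompact_closedBall 0 r)).mono_set
      ball_subset_closedBall
  obtain ⟨C, hcut⟩ := cutoff_exists n
  obtain ⟨K, hKb⟩ := decay_volume_le (n := n) (M := M) (C := C) hμ
  choose! φ hφ hφcs hφ0 hφle hφ1 hφ2 hφd using hcut
  have hGi : ∀ R : ℝ, 1 ≤ R → Integrable fun x => φ R x ^ 2 * h x := by
    intro R hR
    have hcs : HasCompactSupport fun x => φ R x ^ 2 :=
      (hφcs R hR).comp_left (g := fun t : ℝ => t ^ 2) (by simp)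
    have hcont : Continuous fun x => φ R x ^ 2 * h x := ((hφ R hR).continuous.pow 2).mul hhc
    exact hcont.integrable_of_hasCompactSupport (hcs.mul_right (f' := h))
  have hG0 : ∀ R x, 0 ≤ φ R x ^ 2 * h x := fun R x => mul_nonneg (sq_nonneg _) (hh0 x)
  have hGle : ∀ R, 1 ≤ R → ∀ x, φ R x ^ 2 * h x ≤ h x := fun R hR x =>
    mul_le_of_le_one_left (hh0 x) (pow_le_one₀ (hφ0 R hR x) (hφle R hR x))
  have key : ∀ R, ∫ x in ball 0 R, h x ≤ 0 := by
    refine energy_nonpos (G := fun R => ∫ x, φ R x ^ 2 * h x)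
      (I := fun R => ∫ x in ball 0 (2 * R) \ ball 0 R, φ R x ^ 2 * h x)
      (K := K) hlam hLam ?_ ?_ ?_ ?_ ?_
    · intro r s hrs
      exact setIntegral_mono_set (hhi s) (ae_of_all _ hh0) (ball_subset_ball hrs).eventuallyLE
    · intro R hR
      have : ∫ x in ball 0 R, h x = ∫ x in ball 0 R, φ R x ^ 2 * h x :=
        setIntegral_congr_fun measurableSet_ball fun x hx => by simp [hφ1 R hR x hx]
      rw [this]
      exact setIntegral_le_integral (hGi R hR) (ae_of_all _ (hG0 R))
    · intro R hR
      exact setIntegral_le_integral (hGi R hR) (ae_of_all _ (hG0 R))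
    · intro R hR
      rw [← setIntegral_sdiff measurableSet_ball (hhi _) (ball_subset_ball (by linarith))]
      exact setIntegral_mono (hGi R hR).integrableOn ((hhi _).mono_set Set.sdiff_subset)
        (hGle R hR)
    · intro R hR ε hε
      have hR0 : 0 < R := by linarith
      refine (caccioppoli (c := (M * R ^ (-μ)) ^ 2 * (n * (C / R) ^ 2)) hLam hε F hF w hw hdv
        hell1 hFb (φ R) (hφ R hR) (hφcs R hR) (hφ0 R hR) (hφ1 R hR) (hφ2 R hR) ?_).trans ?_
      · intro x hx
        have hxR : R ≤ ‖x‖ := by simpa using hx.2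
        have hwx : ‖w x‖ ≤ M * R ^ (-μ) := by
          refine (hdecay x).trans (mul_le_mul_of_nonneg_left ?_ hM.le)
          exact Real.rpow_le_rpow_of_nonpos hR0 (by linarith) (by linarith)
        have hg : ∑ k, (fderiv ℝ (φ R) x (EuclideanSpace.single k 1)) ^ 2 ≤ n * (C / R) ^ 2 := by
          calc _ ≤ ∑ _k : Fin n, (C / R) ^ 2 := by
                refine Finset.sum_le_sum fun k _ => ?_
                rw [← sq_abs, ← Real.norm_eq_abs]
                gcongr
                refine ((fderiv ℝ (φ R) x).le_opNorm _).trans ?_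
                simpa using hφd R hR x
            _ = _ := by simp
        gcongr
      · rw [mul_assoc (Lam / ε)]
        gcongr
        exact hKb R hR
  have hzero : ∀ x, h x = 0 := by
    intro x
    have hI : ∫ y in ball 0 (‖x‖ + 1), h y = 0 :=
      le_antisymm (key _) (integral_nonneg hh0)
    have hae := (setIntegral_eq_zero_iff_of_nonneg_ae (ae_of_all _ hh0) (hhi _)).1 hI
    exact Measure.eqOn_open_of_ae_eq hae isOpen_ball hhc.continuousOn continuousOn_const
      (by simp : x ∈ ball 0 (‖x‖ + 1))
  have hp : ∀ x k, pdC w x k = 0 := by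
    intro x k
    have := (Finset.sum_eq_zero_iff_of_nonneg (fun k _ => by positivity)).1 (hzero x) k
      (Finset.mem_univ k)
    simpa using this
  intro x
  have hx := heq x
  simp only [divAgrad, hp, mul_zero, Finset.sum_const_zero, add_zero] at hx
  have hne : Complex.I + (μ : ℂ) ≠ 0 := fun h => by simpa using congrArg Complex.im h
  have : (Complex.I + (μ : ℂ)) * w x = 0 := by
    simp at hx
    linear_combination hx
  exact (mul_eq_zero.1 this).resolve_left hne
end
end
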